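/- arXiv:2304.07673 — 2 statements merged into one kernel-verified Lean document; each statement's English description precedes it below -/
import Mathlib

section
/- (Diagonal case of Proposition 1.) In the noise-free closed loop with x₀ = 0 and all reference inputs equal to zero except the reference x_j^r at a single stage j ∈ {1,...,K}, the measurement at stage j equals y_j = C_j B_j L_{R_j} x_j^r. -/
open Matrix BigOperators

/-!
The predictor of the Kalman filter applies the same map `(s, v) ↦ A k s + B k v` as the plant. So if
the estimate is exact at one stage, then at the next stage the innovation vanishes and the estimate
is exact again. A zero initial state is estimated exactly, and along exact estimates the state obeys
`x k = (A k + B k L k) (x (k - 1)) + B k (LR k (xr k))`. It therefore stays zero until the first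
nonzero reference, which enters the state only through `B k (LR k (xr k))`.
-/

/-- A linear multistage system together with its controller and Kalman filter: `A`, `B`, `C` are the
plant, input and measurement maps, `L` and `LR` the feedback and reference gains, and `Km` the
Kalman gains. The modules `X k`, `U k`, `Y k` of states, inputs and measurements vary with the
stage. Only `C` and `Km` enter the closed loop at `k = 0`; since `0 - 1 = 0` in `ℕ`, the unused
`A 0` and `L 0` have domain `X 0`. -/
structure MultistageSystem (R : Type*) [Semiring R] (X U Y : ℕ → Type*)
    [∀ k, AddCommMonoid (X k)] [∀ k, Module R (X k)]
    [∀ k, AddCommMonoid (U k)] [∀ k, Module R (U k)]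
    [∀ k, AddCommGroup (Y k)] [∀ k, Module R (Y k)] where
  A : ∀ k, X (k - 1) →ₗ[R] X k
  B : ∀ k, U k →ₗ[R] X k
  C : ∀ k, X k →ₗ[R] Y k
  L : ∀ k, X (k - 1) →ₗ[R] U k
  LR : ∀ k, X k →ₗ[R] U k
  Km : ∀ k, Y k →ₗ[R] X k

namespace MultistageSystem

variable {R : Type*} [Semiring R] {X U Y : ℕ → Type*}
  [∀ k, AddCommMonoid (X k)] [∀ k, Module R (X k)]
  [∀ k, AddCommMonoid (U k)] [∀ k, Module R (U k)]
  [∀ k, AddCommGroup (Y k)] [∀ k, Module R (Y k)]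

/-- The noise-free one-stage dynamics, shared by the plant (applied to the state) and by the
predictor of the Kalman filter (applied to the estimate). -/
def step (S : MultistageSystem R X U Y) (k : ℕ) (s : X (k - 1)) (v : U k) : X k :=
  S.A k s + S.B k v

/-- The closed-loop transition map `A k + B k L k` of full state feedback. -/
def closedLoopMap (S : MultistageSystem R X U Y) (k : ℕ) : X (k - 1) →ₗ[R] X k :=
  S.A k + S.B k ∘ₗ S.L k

/-- The noise-free closed loop over the stages `0, …, K`, driven by the references `xr`. The signals
are the state `x`, the measurement `y`, the input `u` and the filtered estimate `xhat`, with
`xhat k` standing for the estimate of `x k` given the measurements up to stage `k`. -/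
structure IsClosedLoop (S : MultistageSystem R X U Y) (K : ℕ) (xr x : ∀ k, X k) (y : ∀ k, Y k)
    (u : ∀ k, U k) (xhat : ∀ k, X k) : Prop where
  measurement_zero : y 0 = S.C 0 (x 0)
  estimate_zero : xhat 0 = S.Km 0 (y 0)
  input : ∀ k, 1 ≤ k → k ≤ K → u k = S.L k (xhat (k - 1)) + S.LR k (xr k)
  state : ∀ k, 1 ≤ k → k ≤ K → x k = S.step k (x (k - 1)) (u k)
  measurement : ∀ k, 1 ≤ k → k ≤ K → y k = S.C k (x k)
  estimate : ∀ k, 1 ≤ k → k ≤ K → xhat k =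
    S.step k (xhat (k - 1)) (u k) + S.Km k (y k - S.C k (S.step k (xhat (k - 1)) (u k)))

namespace IsClosedLoop

variable {S : MultistageSystem R X U Y} {K k : ℕ} {xr x : ∀ k, X k} {y : ∀ k, Y k}
  {u : ∀ k, U k} {xhat : ∀ k, X k}

theorem estimate_zero_eq_state_zero (h : S.IsClosedLoop K xr x y u xhat) (hx0 : x 0 = 0) :
    xhat 0 = x 0 := by
  rw [h.estimate_zero, h.measurement_zero, hx0, map_zero, map_zero]

theorem estimate_eq_state_of_pred (h : S.IsClosedLoop K xr x y u xhat) (hk : 1 ≤ k) (hkK : k ≤ K)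
    (hpred : xhat (k - 1) = x (k - 1)) : xhat k = x k := by
  have prediction_eq : S.step k (xhat (k - 1)) (u k) = x k := by
    rw [hpred, h.state k hk hkK]
  have innovation_eq_zero : y k - S.C k (x k) = 0 := by
    rw [h.measurement k hk hkK, sub_self]
  rw [h.estimate k hk hkK, prediction_eq, innovation_eq_zero, map_zero, add_zero]

theorem estimate_eq_state (h : S.IsClosedLoop K xr x y u xhat) (h0 : xhat 0 = x 0) (hkK : k ≤ K) :
    xhat k = x k := by
  induction k with
  | zero => exact h0
  | succ k ih => exact h.estimate_eq_state_of_pred k.succ_pos hkK (ih (Nat.le_of_succ_le hkK))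

theorem state_eq_closedLoopMap_add (h : S.IsClosedLoop K xr x y u xhat) (h0 : xhat 0 = x 0)
    (hk : 1 ≤ k) (hkK : k ≤ K) :
    x k = S.closedLoopMap k (x (k - 1)) + S.B k (S.LR k (xr k)) := by
  have hpred : xhat (k - 1) = x (k - 1) := h.estimate_eq_state h0 ((k.sub_le 1).trans hkK)
  calc x k = S.A k (x (k - 1)) + S.B k (S.L k (x (k - 1)) + S.LR k (xr k)) := by
        rw [h.state k hk hkK, h.input k hk hkK, hpred, step]
    _ = S.closedLoopMap k (x (k - 1)) + S.B k (S.LR k (xr k)) := by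
        rw [map_add, ← add_assoc, closedLoopMap, LinearMap.add_apply, LinearMap.comp_apply]

theorem state_eq_zero (h : S.IsClosedLoop K xr x y u xhat) (hx0 : x 0 = 0) (hkK : k ≤ K)
    (hxr : ∀ i, 1 ≤ i → i ≤ k → xr i = 0) : x k = 0 := by
  induction k with
  | zero => exact hx0
  | succ k ih =>
    have hprev : x (k + 1 - 1) = 0 :=
      ih (Nat.le_of_succ_le hkK) fun i hi hik => hxr i hi (Nat.le_succ_of_le hik)
    rw [h.state_eq_closedLoopMap_add (h.estimate_zero_eq_state_zero hx0) k.succ_pos hkK, hprev,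
      hxr (k + 1) k.succ_pos le_rfl, map_zero, map_zero, map_zero, add_zero]

end IsClosedLoop

/-- The multistage system on coordinate spaces whose maps are multiplication by the given matrices,
as in the matrix formulation of the closed loop. -/
def ofMatrices {R : Type*} [CommRing R] {ι κ ν : ℕ → Type*}
    [∀ k, Fintype (ι k)] [∀ k, Fintype (κ k)] [∀ k, Fintype (ν k)]
    (A : ∀ k, Matrix (ι k) (ι (k - 1)) R) (B : ∀ k, Matrix (ι k) (κ k) R)
    (C : ∀ k, Matrix (ν k) (ι k) R) (L : ∀ k, Matrix (κ k) (ι (k - 1)) R)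
    (LR : ∀ k, Matrix (κ k) (ι k) R) (Km : ∀ k, Matrix (ι k) (ν k) R) :
    MultistageSystem R (fun k => ι k → R) (fun k => κ k → R) (fun k => ν k → R) where
  A k := (A k).mulVecLin
  B k := (B k).mulVecLin
  C k := (C k).mulVecLin
  L k := (L k).mulVecLin
  LR k := (LR k).mulVecLin
  Km k := (Km k).mulVecLin

end MultistageSystem

theorem stmt3_general {R : Type*} [Semiring R] {X U Y : ℕ → Type*}
    [∀ k, AddCommMonoid (X k)] [∀ k, Module R (X k)]
    [∀ k, AddCommMonoid (U k)] [∀ k, Module R (U k)]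
    [∀ k, AddCommGroup (Y k)] [∀ k, Module R (Y k)]
    {S : MultistageSystem R X U Y} {K j : ℕ} {xr x : ∀ k, X k} {y : ∀ k, Y k}
    {u : ∀ k, U k} {xhat : ∀ k, X k} (h : S.IsClosedLoop K xr x y u xhat) (hx0 : x 0 = 0)
    (hj1 : 1 ≤ j) (hjK : j ≤ K) (hxr : ∀ i, 1 ≤ i → i < j → xr i = 0) :
    y j = S.C j (S.B j (S.LR j (xr j))) := by
  have hprev : x (j - 1) = 0 :=
    h.state_eq_zero hx0 ((j.sub_le 1).trans hjK) fun i hi hij => hxr i hi (by lia)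
  rw [h.measurement j hj1 hjK,
    h.state_eq_closedLoopMap_add (h.estimate_zero_eq_state_zero hx0) hj1 hjK, hprev, map_zero,
    zero_add]

theorem stmt3
    (K : ℕ) (hK : 1 ≤ K)
    (m n p : ℕ → ℕ)
    (A : ∀ k : ℕ, Matrix (Fin (m k)) (Fin (m (k - 1))) ℝ)
    (B : ∀ k : ℕ, Matrix (Fin (m k)) (Fin (p k)) ℝ)
    (C : ∀ k : ℕ, Matrix (Fin (n k)) (Fin (m k)) ℝ)
    (L : ∀ k : ℕ, Matrix (Fin (p k)) (Fin (m (k - 1))) ℝ)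
    (LR : ∀ k : ℕ, Matrix (Fin (p k)) (Fin (m k)) ℝ)
    (Km : ∀ k : ℕ, Matrix (Fin (m k)) (Fin (n k)) ℝ)
    (j : ℕ) (hj1 : 1 ≤ j) (hjK : j ≤ K)
    (xr : ∀ k : ℕ, Fin (m k) → ℝ)
    (hxr : ∀ k, k ≠ j → xr k = 0)
    (x : ∀ k : ℕ, Fin (m k) → ℝ) (y : ∀ k : ℕ, Fin (n k) → ℝ)
    (u : ∀ k : ℕ, Fin (p k) → ℝ) (xhat : ∀ k : ℕ, Fin (m k) → ℝ)
    (hy0 : y 0 = C 0 *ᵥ x 0)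
    (hxhat0 : xhat 0 = Km 0 *ᵥ y 0)
    (hu : ∀ k, 1 ≤ k → k ≤ K → u k = L k *ᵥ xhat (k - 1) + LR k *ᵥ xr k)
    (hx : ∀ k, 1 ≤ k → k ≤ K → x k = A k *ᵥ x (k - 1) + B k *ᵥ u k)
    (hy : ∀ k, 1 ≤ k → k ≤ K → y k = C k *ᵥ x k)
    (hxhat : ∀ k, 1 ≤ k → k ≤ K →
      xhat k = (A k *ᵥ xhat (k - 1) + B k *ᵥ u k)
        + Km k *ᵥ (y k - C k *ᵥ (A k *ᵥ xhat (k - 1) + B k *ᵥ u k)))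
    (hx0 : x 0 = 0)
    :
    y j = (C j * (B j * LR j)) *ᵥ xr j := by
  have closed_loop : (MultistageSystem.ofMatrices A B C L LR Km).IsClosedLoop K xr x y u xhat :=
    ⟨hy0, hxhat0, hu, hx, hy, hxhat⟩
  rw [← mulVec_mulVec, ← mulVec_mulVec]
  exact stmt3_general closed_loop hx0 hj1 hjK fun k _ hkj => hxr k hkj.ne
end

section
/- (First-column case of Proposition 1, general i, proved by induction in Appendix A.) In the noise-free closed loop with all reference inputs equal to zero, for every i with 3 ≤ i ≤ K+1 the measurement at stage i−1 equals y_{i−1} = h_{i1} x₀, where h_{i1} = C_{i−1} [ (∏_{k=1}^{i−2} (A_{i−k} + B_{i−k} L_{i−k})) (A₁ + B₁ L₁ K₀ C₀) − Σ_{j=1}^{i−3} ( (∏_{k=1}^{j} (A_{i−k} + B_{i−k} L_{i−k})) B_{i−(j+1)} L_{i−(j+1)} (∏_{c=j+2}^{i−1} (I − K_{i−c} C_{i−c}) A_{i−c}) (I − K₀ C₀) ) − B_{i−1} L_{i−1} (∏_{m=2}^{i−1} (I − K_{i−m} C_{i−m}) A_{i−m}) (I − K₀ C₀) ], and in every displayed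 product the factors are multiplied in order of increasing value of the product index (so stage indices decrease from left to right). -/
open Matrix BigOperators

/-- Product of stage-indexed matrix factors `F (lo+1), ..., F hi`, multiplied with
decreasing stage index from left to right: `F hi * F (hi-1) * ... * F (lo+1)`
(the identity matrix when `hi = lo`, a junk zero matrix when `hi < lo`). -/
def chainProd (m : ℕ → ℕ) (F : ∀ k : ℕ, Matrix (Fin (m k)) (Fin (m (k - 1))) ℝ)
    (hi lo : ℕ) : Matrix (Fin (m hi)) (Fin (m lo)) ℝ :=
  if _h : lo < hi then F hi * chainProd m F (hi - 1) lo
  else Matrix.of fun r c => if (r : ℕ) = (c : ℕ) ∧ hi = lo then 1 else 0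
termination_by hi
decreasing_by omega

/-!
The feedback acts on the estimate, so each closed-loop stage is
`x k = (A k + B k L k) x (k - 1) - B k L k e (k - 1)` with estimation error `e = x - x̂`. The input
cancels from `e`, which obeys the homogeneous recursion `e k = (1 - K k C k) A k e (k - 1)` with
`e 0 = (1 - K₀ C₀) x₀`. Solving the affine recursion for `x` from stage 1 onwards and inserting the
solution for `e` gives the formula, whose sum runs through the stages backwards. Starting at stage 1
keeps `x 1 = (A₁ + B₁ L₁ K₀ C₀) x₀` as one factor instead of splitting off its error part.
-/

section StageRecursion

variable {m : ℕ → ℕ}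

theorem chainProd_of_lt (F : ∀ k : ℕ, Matrix (Fin (m k)) (Fin (m (k - 1))) ℝ) {hi lo : ℕ}
    (h : lo < hi) : chainProd m F hi lo = F hi * chainProd m F (hi - 1) lo := by
  rw [chainProd, dif_pos h]

theorem chainProd_self (F : ∀ k : ℕ, Matrix (Fin (m k)) (Fin (m (k - 1))) ℝ) (k : ℕ) :
    chainProd m F k k = 1 := by
  rw [chainProd, dif_neg (lt_irrefl k)]
  ext r c
  simp [Matrix.one_apply, Fin.ext_iff]

theorem eq_chainProd_mulVec_add_sum {F : ∀ k : ℕ, Matrix (Fin (m k)) (Fin (m (k - 1))) ℝ}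
    {x w : ∀ k : ℕ, Fin (m k) → ℝ} {lo hi : ℕ} (hle : lo ≤ hi)
    (hx : ∀ k, lo < k → k ≤ hi → x k = F k *ᵥ x (k - 1) + w k) :
    x hi = chainProd m F hi lo *ᵥ x lo
      + ∑ s ∈ Finset.Ioc lo hi, chainProd m F hi s *ᵥ w s := by
  induction hi, hle using Nat.le_induction with
  | base => simp [chainProd_self]
  | succ k hk ih =>
    have hprev : x k = chainProd m F k lo *ᵥ x lo
        + ∑ s ∈ Finset.Ioc lo k, chainProd m F k s *ᵥ w s :=
      ih fun j hj hjk => hx j hj (hjk.trans k.le_succ)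
    have hchain : ∀ s ≤ k, ∀ v : Fin (m s) → ℝ,
        chainProd m F (k + 1) s *ᵥ v = F (k + 1) *ᵥ (chainProd m F k s *ᵥ v) := fun s hs v => by
      rw [chainProd_of_lt F (Nat.lt_succ_of_le hs)]
      exact (mulVec_mulVec v _ _).symm
    calc x (k + 1) = F (k + 1) *ᵥ x k + w (k + 1) := hx (k + 1) (Nat.lt_succ_of_le hk) le_rfl
      _ = chainProd m F (k + 1) lo *ᵥ x lo
          + (∑ s ∈ Finset.Ioc lo k, chainProd m F (k + 1) s *ᵥ w s + w (k + 1)) := by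
        rw [hprev, mulVec_add, mulVec_sum, hchain lo hk, add_assoc,
          Finset.sum_congr rfl fun s hs => hchain s (Finset.mem_Ioc.mp hs).2 (w s)]
      _ = _ := by
        rw [Finset.sum_Ioc_succ_top hk, chainProd_self, one_mulVec]

theorem eq_chainProd_mulVec {F : ∀ k : ℕ, Matrix (Fin (m k)) (Fin (m (k - 1))) ℝ}
    {x : ∀ k : ℕ, Fin (m k) → ℝ} {lo hi : ℕ} (hle : lo ≤ hi)
    (hx : ∀ k, lo < k → k ≤ hi → x k = F k *ᵥ x (k - 1)) :
    x hi = chainProd m F hi lo *ᵥ x lo := by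
  simpa using eq_chainProd_mulVec_add_sum (w := 0) hle
    fun k hk hkhi => by simpa using hx k hk hkhi

end StageRecursion

section OneStage

variable {R ι ι' κ : Type*} [Ring R] [Fintype ι'] [Fintype κ]

theorem kalman_error_step [Fintype ι] [DecidableEq ι] (A : Matrix ι ι' R) (C : Matrix κ ι R)
    (G : Matrix ι κ R) (x xhat : ι' → R) (v : ι → R) :
    (A *ᵥ x + v) - ((A *ᵥ xhat + v) + G *ᵥ (C *ᵥ (A *ᵥ x + v) - C *ᵥ (A *ᵥ xhat + v)))
      = ((1 - G * C) * A) *ᵥ (x - xhat) := by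
  have hpred : (A *ᵥ x + v) - (A *ᵥ xhat + v) = A *ᵥ (x - xhat) := by
    rw [add_sub_add_right_eq_sub, mulVec_sub]
  rw [← sub_sub, ← mulVec_sub, hpred, ← mulVec_mulVec, sub_mulVec, one_mulVec, mulVec_mulVec]

theorem estimate_feedback_step (A : Matrix ι ι' R) (B : Matrix ι κ R) (L : Matrix κ ι' R)
    (x xhat : ι' → R) :
    A *ᵥ x + B *ᵥ (L *ᵥ xhat) = (A + B * L) *ᵥ x - (B * L) *ᵥ (x - xhat) := by
  rw [add_mulVec, mulVec_sub, mulVec_mulVec]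
  abel

end OneStage

section ClosedLoop

variable {m n p : ℕ → ℕ}
  {A : ∀ k : ℕ, Matrix (Fin (m k)) (Fin (m (k - 1))) ℝ}
  {x xhat : ∀ k : ℕ, Fin (m k) → ℝ}

theorem estimation_error_eq_chainProd_mulVec
    {C : ∀ k : ℕ, Matrix (Fin (n k)) (Fin (m k)) ℝ}
    {G : ∀ k : ℕ, Matrix (Fin (m k)) (Fin (n k)) ℝ}
    {v : ∀ k : ℕ, Fin (m k) → ℝ} {lo hi : ℕ} (hle : lo ≤ hi)
    (hx : ∀ k, lo < k → k ≤ hi → x k = A k *ᵥ x (k - 1) + v k)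
    (hxhat : ∀ k, lo < k → k ≤ hi →
      xhat k = (A k *ᵥ xhat (k - 1) + v k)
        + G k *ᵥ (C k *ᵥ x k - C k *ᵥ (A k *ᵥ xhat (k - 1) + v k))) :
    x hi - xhat hi
      = chainProd m (fun s => (1 - G s * C s) * A s) hi lo *ᵥ (x lo - xhat lo) := by
  refine eq_chainProd_mulVec (x := fun k => x k - xhat k) hle fun k hk hkhi => ?_
  rw [hxhat k hk hkhi, hx k hk hkhi]
  exact kalman_error_step (A k) (C k) (G k) (x (k - 1)) (xhat (k - 1)) (v k)

theorem state_eq_mulVec_of_estimation_error {ι : Type*} [Fintype ι] {x₀ : ι → ℝ}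
    {B : ∀ k : ℕ, Matrix (Fin (m k)) (Fin (p k)) ℝ}
    {L : ∀ k : ℕ, Matrix (Fin (p k)) (Fin (m (k - 1))) ℝ}
    {E : ∀ k : ℕ, Matrix (Fin (m k)) ι ℝ} {lo hi : ℕ} {T : Matrix (Fin (m lo)) ι ℝ}
    (hle : lo ≤ hi)
    (hx : ∀ k, lo < k → k ≤ hi → x k = A k *ᵥ x (k - 1) + B k *ᵥ (L k *ᵥ xhat (k - 1)))
    (hlo : x lo = T *ᵥ x₀)
    (herr : ∀ k, lo ≤ k → k < hi → x k - xhat k = E k *ᵥ x₀) :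
    x hi = (chainProd m (fun b => A b + B b * L b) hi lo * T
      - ∑ s ∈ Finset.Ioc lo hi,
          chainProd m (fun b => A b + B b * L b) hi s * (B s * L s) * E (s - 1)) *ᵥ x₀ := by
  have hstep : ∀ k, lo < k → k ≤ hi →
      x k = (A k + B k * L k) *ᵥ x (k - 1) + -((B k * L k * E (k - 1)) *ᵥ x₀) :=
    fun k hk hkhi => by
      rw [hx k hk hkhi, estimate_feedback_step, herr (k - 1) (by omega) (by omega),
        mulVec_mulVec, sub_eq_add_neg]
  rw [eq_chainProd_mulVec_add_sum (F := fun b => A b + B b * L b)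
    (w := fun k => -((B k * L k * E (k - 1)) *ᵥ x₀)) hle hstep, hlo]
  simp only [mulVec_neg, Finset.sum_neg_distrib, mulVec_mulVec, sub_mulVec, sum_mulVec,
    Matrix.mul_assoc, ← sub_eq_add_neg]

end ClosedLoop

theorem sum_Ioc_eq_sum_Icc_reflect_add {M : Type*} [AddCommMonoid M] (f : ℕ → M) {lo hi : ℕ}
    (h : lo < hi) :
    ∑ s ∈ Finset.Ioc lo hi, f s = ∑ j ∈ Finset.Icc 1 (hi - lo - 1), f (hi - j) + f hi := by
  rw [← Finset.Ioo_insert_right h, Finset.sum_insert Finset.right_notMem_Ioo, add_comm]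
  congr 1
  refine Finset.sum_nbij' (hi - ·) (hi - ·) ?_ ?_ ?_ ?_ ?_ <;>
    simp only [Finset.mem_Ioo, Finset.mem_Icc] <;> intro s hs
  · omega
  · omega
  · omega
  · omega
  · rw [Nat.sub_sub_self hs.2.le]

theorem stmt6
    (K : ℕ) (hK : 1 ≤ K)
    (m n p : ℕ → ℕ)
    (A : ∀ k : ℕ, Matrix (Fin (m k)) (Fin (m (k - 1))) ℝ)
    (B : ∀ k : ℕ, Matrix (Fin (m k)) (Fin (p k)) ℝ)
    (C : ∀ k : ℕ, Matrix (Fin (n k)) (Fin (m k)) ℝ)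
    (L : ∀ k : ℕ, Matrix (Fin (p k)) (Fin (m (k - 1))) ℝ)
    (LR : ∀ k : ℕ, Matrix (Fin (p k)) (Fin (m k)) ℝ)
    (Km : ∀ k : ℕ, Matrix (Fin (m k)) (Fin (n k)) ℝ)
    (xr : ∀ k : ℕ, Fin (m k) → ℝ)
    (hxr : ∀ k, 1 ≤ k → k ≤ K → xr k = 0)
    (x : ∀ k : ℕ, Fin (m k) → ℝ) (y : ∀ k : ℕ, Fin (n k) → ℝ)
    (u : ∀ k : ℕ, Fin (p k) → ℝ) (xhat : ∀ k : ℕ, Fin (m k) → ℝ)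
    (hy0 : y 0 = C 0 *ᵥ x 0)
    (hxhat0 : xhat 0 = Km 0 *ᵥ y 0)
    (hu : ∀ k, 1 ≤ k → k ≤ K → u k = L k *ᵥ xhat (k - 1) + LR k *ᵥ xr k)
    (hx : ∀ k, 1 ≤ k → k ≤ K → x k = A k *ᵥ x (k - 1) + B k *ᵥ u k)
    (hy : ∀ k, 1 ≤ k → k ≤ K → y k = C k *ᵥ x k)
    (hxhat : ∀ k, 1 ≤ k → k ≤ K →
      xhat k = (A k *ᵥ xhat (k - 1) + B k *ᵥ u k)
        + Km k *ᵥ (y k - C k *ᵥ (A k *ᵥ xhat (k - 1) + B k *ᵥ u k)))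
    :
    ∀ i, 3 ≤ i → i ≤ K + 1 →
      y (i - 1) =
        (C (i - 1) *
          (chainProd m (fun b => A b + B b * L b) (i - 1) 1 * (A 1 + B 1 * (L 1 * (Km 0 * C 0)))
            - ∑ j ∈ Finset.Icc 1 (i - 3),
                chainProd m (fun b => A b + B b * L b) (i - 1) (i - j - 1)
                  * (B (i - j - 1) * L (i - j - 1))
                  * (chainProd m (fun s => (1 - Km s * C s) * A s) (i - j - 1 - 1) 0
                      * (1 - Km 0 * C 0))
            - B (i - 1) * L (i - 1)
                * (chainProd m (fun s => (1 - Km s * C s) * A s) (i - 1 - 1) 0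
                    * (1 - Km 0 * C 0)))) *ᵥ x 0 := by
  intro i hi hiK
  have hfb : ∀ k, 1 ≤ k → k ≤ K → x k = A k *ᵥ x (k - 1) + B k *ᵥ (L k *ᵥ xhat (k - 1)) :=
    fun k hk hkK => by rw [hx k hk hkK, hu k hk hkK, hxr k hk hkK, mulVec_zero, add_zero]
  have hest0 : xhat 0 = (Km 0 * C 0) *ᵥ x 0 := by rw [hxhat0, hy0, mulVec_mulVec]
  have herr0 : x 0 - xhat 0 = (1 - Km 0 * C 0) *ᵥ x 0 := by rw [hest0, sub_mulVec, one_mulVec]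
  have hstate1 : x 1 = (A 1 + B 1 * (L 1 * (Km 0 * C 0))) *ᵥ x 0 := by
    simp only [hfb 1 le_rfl hK, hest0, add_mulVec, mulVec_mulVec]
  have herr : ∀ k < i - 1, x k - xhat k =
      (chainProd m (fun s => (1 - Km s * C s) * A s) k 0 * (1 - Km 0 * C 0)) *ᵥ x 0 := by
    intro k hk
    rw [estimation_error_eq_chainProd_mulVec k.zero_le (fun j hj hjk => hx j hj (by omega))
      (fun j hj hjk => hy j hj (by omega) ▸ hxhat j hj (by omega)), herr0, mulVec_mulVec]
  have hreflect (f : ℕ → Matrix (Fin (m (i - 1))) (Fin (m 0)) ℝ) : ∑ s ∈ Finset.Ioc 1 (i - 1), f s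
      = ∑ j ∈ Finset.Icc 1 (i - 3), f (i - j - 1) + f (i - 1) := by
    simpa only [Nat.sub_right_comm i 1, Nat.sub_sub, Nat.reduceAdd] using
      sum_Ioc_eq_sum_Icc_reflect_add f (by omega : 1 < i - 1)
  rw [hy (i - 1) (by omega) (by omega), ← mulVec_mulVec,
    state_eq_mulVec_of_estimation_error (by omega : 1 ≤ i - 1)
      (fun k hk hki => hfb k hk.le (by omega)) hstate1 (fun k _ => herr k),
    hreflect, chainProd_self, Matrix.one_mul, sub_add_eq_sub_sub]
end
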